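/- Let ψ : I → ℂ be measurable and suppose there exist C, p > 0 such that |ψ(x)| ≤ C (sin(x/2))^p for all x ∈ I. Then the kernel K(x,y) = ψ(x)* K₁(x,y) ψ(y) defines a compact, self-adjoint integral operator on L²(I). -/

import Mathlib

/-!
The point is that some power `|K| ^ r` with `r > 1`, and not merely `|K|`, is the kernel of a
bounded operator on `L²(I)`. The part of `K` where `|K| > N` is dominated by
`N ^ (1 - r) * |K| ^ r`, so it is small in operator norm; what remains is a bounded kernel on a
space of finite measure, hence Hilbert–Schmidt and compact. Thus `T` is a norm limit of compact
operators, and it is self-adjoint because `K` is Hermitian.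

The bound for `|K| ^ r` is Schur's test with weight `sin (x / 2) ^ (-1 / 2)`. The region `Fm > 0`
has two halves, exchanged by the reflection `(x, y) ↦ (2 * π - x, 2 * π - y)`. In the coordinates
`s = tan (x / 4)` and `t = tan (y / 4)`, a section of the first half is an interval `0 < t < τ`, and
`K₁` is at most of order `(1 - t / τ) ^ (-1 / 2)` there, so for `r < 2` the weighted integral of
`K₁ ^ r` is bounded by a beta integral. Near `0` and `2π` the bound grows like
`sin (x / 2) ^ (3 / 2 - 2 * r)`, and for `2 * r - 2 ≤ p` the decay of `ψ` absorbs the excess over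
the weight.
-/

open MeasureTheory Real Set Filter
open scoped Topology ENNReal ComplexConjugate

noncomputable section

/-- The fundamental periodic cell `I = [0, 2π)`. -/
def II : Set ℝ := Set.Ico 0 (2 * π)

/-- Lebesgue measure restricted to `I`. -/
def muI : Measure ℝ := volume.restrict II

/-- The dispersion relation `ω(x) = |sin(x/2)|`. -/
def omg (x : ℝ) : ℝ := |Real.sin (x / 2)|

/-- `Ω(x,y,z) = ω(x) + ω(y) − ω(z) − ω(x+y−z)`. -/
def Omg (x y z : ℝ) : ℝ := omg x + omg y - omg z - omg (x + y - z)

/-- The representative of `x` modulo `2π` lying in `[0, 2π)`. -/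
def mod2pi (x : ℝ) : ℝ := x - 2 * π * (⌊x / (2 * π)⌋ : ℝ)

/-- `h` on the fundamental cell: `h(x,z) = (z−x)/2 + 2 arcsin( tan(|z−x|/4) cos((x+z)/4) )`. -/
def h0 (x z : ℝ) : ℝ :=
  (z - x) / 2 + 2 * Real.arcsin (Real.tan (|z - x| / 4) * Real.cos ((x + z) / 4))

/-- The extension of `h` to all of `ℝ²`: `h(x,z) = h(x mod 2π, z mod 2π) − (x − (x mod 2π))`. -/
def hFPU (x z : ℝ) : ℝ := h0 (mod2pi x) (mod2pi z) - (x - mod2pi x)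

/-- `F₊(x,y) = (cos(x/2)+cos(y/2))² + 4 sin(x/2) sin(y/2)`. -/
def Fp (x y : ℝ) : ℝ :=
  (Real.cos (x / 2) + Real.cos (y / 2)) ^ 2 + 4 * Real.sin (x / 2) * Real.sin (y / 2)

/-- `F₋(x,y) = (cos(x/2)+cos(y/2))² − 4 sin(x/2) sin(y/2)`. -/
def Fm (x y : ℝ) : ℝ :=
  (Real.cos (x / 2) + Real.cos (y / 2)) ^ 2 - 4 * Real.sin (x / 2) * Real.sin (y / 2)

/-- The kernel `K₁(x,y) = 4·𝟙(F₋(x,y) > 0)/√(F₋(x,y))`. -/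
def K1 (x y : ℝ) : ℝ := if 0 < Fm x y then 4 / Real.sqrt (Fm x y) else 0

/-- The kernel `K₂(x,y) = 2/√(F₊(x,y))`. -/
def K2 (x y : ℝ) : ℝ := 2 / Real.sqrt (Fp x y)

/-- `V(x) = ∫_I K₂(x,y) dy`. -/
def VV (x : ℝ) : ℝ := ∫ y in II, K2 x y

/-- `W(x) = sin²(x/2)·V(x)`. -/
def WW (x : ℝ) : ℝ := Real.sin (x / 2) ^ 2 * VV x

open scoped NNReal

section L2BoundedKernel

variable {X Y : Type*} [MeasurableSpace X] [MeasurableSpace Y] {μ : Measure X} {ν : Measure Y}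

/-- The nonnegative kernel `b` maps `L²(ν)` to `L²(μ)` with norm at most `M`. It is stated with
lower integrals of nonnegative functions, so that it makes sense before any integral is known to
converge. -/
def IsL2BoundedKernel (μ : Measure X) (ν : Measure Y) (b : X × Y → ℝ≥0∞) (M : ℝ≥0) : Prop :=
  ∀ f : Y → ℝ≥0∞, Measurable f →
    eLpNorm (fun x ↦ ∫⁻ y, b (x, y) * f y ∂ν) 2 μ ≤ M * eLpNorm f 2 ν

lemma eLpNorm_two_sq {Z ε : Type*} [MeasurableSpace Z] [ENorm ε] (ρ : Measure Z) (f : Z → ε) :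
    eLpNorm f 2 ρ ^ 2 = ∫⁻ z, ‖f z‖ₑ ^ 2 ∂ρ := by
  simpa using eLpNorm_nnreal_pow_eq_lintegral (f := f) (μ := ρ) (p := 2) two_ne_zero

lemma lintegral_mul_le_eLpNorm_two {f g : Y → ℝ≥0∞} (hf : AEMeasurable f ν)
    (hg : AEMeasurable g ν) : ∫⁻ y, f y * g y ∂ν ≤ eLpNorm f 2 ν * eLpNorm g 2 ν := by
  simpa [eLpNorm_eq_lintegral_rpow_enorm_toReal]
    using ENNReal.lintegral_mul_le_Lp_mul_Lq ν Real.HolderConjugate.two_two hf hg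

lemma IsL2BoundedKernel.mono [SFinite ν] {b b' : X × Y → ℝ≥0∞} {M : ℝ≥0}
    (h : IsL2BoundedKernel μ ν b M) (hb : b' ≤ᵐ[μ.prod ν] b) : IsL2BoundedKernel μ ν b' M := by
  intro f hf
  refine (eLpNorm_mono_enorm_ae ?_).trans (h f hf)
  filter_upwards [Measure.ae_ae_of_ae_prod hb] with x hx
  exact lintegral_mono_ae (hx.mono fun y hy ↦ mul_le_mul_left hy _)

lemma IsL2BoundedKernel.mono_bound {b : X × Y → ℝ≥0∞} {M M' : ℝ≥0} (h : IsL2BoundedKernel μ ν b M)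
    (hM : M ≤ M') : IsL2BoundedKernel μ ν b M' := fun f hf ↦
  (h f hf).trans (mul_le_mul_left (ENNReal.coe_le_coe.mpr hM) _)

lemma IsL2BoundedKernel.const_mul {b : X × Y → ℝ≥0∞} {M : ℝ≥0}
    (h : IsL2BoundedKernel μ ν b M) (c : ℝ≥0) :
    IsL2BoundedKernel μ ν (fun z ↦ c * b z) (c * M) := by
  intro f hf
  simp only [mul_assoc, lintegral_const_mul' _ _ ENNReal.coe_ne_top, ENNReal.coe_mul]
  exact (eLpNorm_le_mul_eLpNorm_of_ae_le_mul' (c := c)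
    (g := fun x ↦ ∫⁻ y, b (x, y) * f y ∂ν) (.of_forall fun x ↦ le_rfl) 2).trans
    (mul_le_mul_right (h f hf) _)

lemma IsL2BoundedKernel.add [SFinite ν] {b b' : X × Y → ℝ≥0∞} {M M' : ℝ≥0} (hb : Measurable b)
    (hb' : Measurable b') (h : IsL2BoundedKernel μ ν b M) (h' : IsL2BoundedKernel μ ν b' M') :
    IsL2BoundedKernel μ ν (b + b') (M + M') := by
  intro f hf
  have measurable_lintegral {k : X × Y → ℝ≥0∞} (hk : Measurable k) :
      Measurable fun x ↦ ∫⁻ y, k (x, y) * f y ∂ν :=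
    (hk.mul (hf.comp measurable_snd)).lintegral_prod_right'
  have split (x : X) : ∫⁻ y, (b + b') (x, y) * f y ∂ν =
      ∫⁻ y, b (x, y) * f y ∂ν + ∫⁻ y, b' (x, y) * f y ∂ν := by
    simp only [Pi.add_apply, add_mul]
    exact lintegral_add_left (by fun_prop) _
  simp only [split, ENNReal.coe_add, add_mul]
  exact (eLpNorm_add_le (measurable_lintegral hb).aestronglyMeasurable
    (measurable_lintegral hb').aestronglyMeasurable one_le_two).trans
    (add_le_add (h f hf) (h' f hf))

lemma isL2BoundedKernel_of_eLpNorm_le [SFinite ν] {b : X × Y → ℝ≥0∞} {M : ℝ≥0} (hb : Measurable b)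
    (hM : eLpNorm b 2 (μ.prod ν) ≤ M) : IsL2BoundedKernel μ ν b M := by
  intro f hf
  have sections (x : X) :
      (∫⁻ y, b (x, y) * f y ∂ν) ^ 2 ≤ (∫⁻ y, b (x, y) ^ 2 ∂ν) * eLpNorm f 2 ν ^ 2 := by
    have := lintegral_mul_le_eLpNorm_two (ν := ν) (f := fun y ↦ b (x, y)) (by fun_prop)
      hf.aemeasurable
    simpa [mul_pow, eLpNorm_two_sq _ fun y ↦ b (x, y)] using pow_le_pow_left' this 2
  rw [← ENNReal.pow_le_pow_left_iff two_ne_zero]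
  calc eLpNorm (fun x ↦ ∫⁻ y, b (x, y) * f y ∂ν) 2 μ ^ 2
      ≤ ∫⁻ x, (∫⁻ y, b (x, y) ^ 2 ∂ν) * eLpNorm f 2 ν ^ 2 ∂μ := by
        simpa only [eLpNorm_two_sq, enorm_eq_self] using lintegral_mono sections
    _ = eLpNorm b 2 (μ.prod ν) ^ 2 * eLpNorm f 2 ν ^ 2 := by
        rw [lintegral_mul_const _ (by fun_prop), eLpNorm_two_sq _ b]
        simp [lintegral_prod _ (hb.pow_const 2).aemeasurable]
    _ ≤ (M * eLpNorm f 2 ν) ^ 2 := by rw [← mul_pow]; gcongr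

lemma lintegral_mul_sq_le_of_weight {b f w : Y → ℝ≥0∞} (hb : Measurable b) (hf : Measurable f)
    (hw : Measurable w) (hw0 : ∀ᵐ y ∂ν, w y ≠ 0 ∧ w y ≠ ∞) :
    (∫⁻ y, b y * f y ∂ν) ^ 2 ≤ (∫⁻ y, b y * w y ∂ν) * ∫⁻ y, b y * (f y ^ 2 / w y) ∂ν := by
  have sqrt_sq (a : ℝ≥0∞) : (a ^ (1 / 2 : ℝ)) ^ 2 = a := by
    rw [← ENNReal.rpow_natCast, ← ENNReal.rpow_mul]; norm_num
  have factor : ∀ᵐ y ∂ν, b y * f y =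
      (b y * w y) ^ (1 / 2 : ℝ) * (b y * (f y ^ 2 / w y)) ^ (1 / 2 : ℝ) := by
    filter_upwards [hw0] with y ⟨h0, htop⟩
    have square : b y * w y * (b y * (f y ^ 2 / w y)) = (b y * f y) ^ 2 := by
      rw [mul_mul_mul_comm, ENNReal.mul_div_cancel h0 htop]; ring
    rw [← ENNReal.mul_rpow_of_nonneg _ _ (by norm_num), square, ← ENNReal.rpow_natCast,
      ← ENNReal.rpow_mul]
    norm_num
  rw [lintegral_congr_ae factor]
  refine (pow_le_pow_left' (lintegral_mul_le_eLpNorm_two (by fun_prop) (by fun_prop)) 2).trans ?_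
  rw [mul_pow, eLpNorm_two_sq, eLpNorm_two_sq]
  simp only [enorm_eq_self, sqrt_sq, le_refl]

theorem isL2BoundedKernel_of_schur [SFinite μ] [SFinite ν] {b : X × Y → ℝ≥0∞} {u : X → ℝ≥0∞}
    {w : Y → ℝ≥0∞} {A B : ℝ≥0} (hb : Measurable b) (hu : Measurable u) (hw : Measurable w)
    (hw0 : ∀ᵐ y ∂ν, w y ≠ 0 ∧ w y ≠ ∞) (hA : ∀ᵐ x ∂μ, ∫⁻ y, b (x, y) * w y ∂ν ≤ A * u x)
    (hB : ∀ᵐ y ∂ν, ∫⁻ x, b (x, y) * u x ∂μ ≤ B * w y) :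
    IsL2BoundedKernel μ ν b (NNReal.sqrt (A * B)) := by
  intro f hf
  have norm_sq : ((NNReal.sqrt (A * B) : ℝ≥0) : ℝ≥0∞) ^ 2 = A * B := by
    rw [← ENNReal.coe_pow, NNReal.sq_sqrt, ENNReal.coe_mul]
  rw [← ENNReal.pow_le_pow_left_iff two_ne_zero, mul_pow, norm_sq, eLpNorm_two_sq, eLpNorm_two_sq]
  simp only [enorm_eq_self]
  have row : ∀ᵐ x ∂μ, (∫⁻ y, b (x, y) * f y ∂ν) ^ 2 ≤
      A * ∫⁻ y, b (x, y) * u x * (f y ^ 2 / w y) ∂ν := by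
    filter_upwards [hA] with x hx
    refine (lintegral_mul_sq_le_of_weight (by fun_prop) hf hw hw0).trans ?_
    simp only [mul_right_comm _ (u x)]
    rw [lintegral_mul_const _ (by fun_prop), mul_comm _ (u x), ← mul_assoc]
    gcongr
  have column : ∀ᵐ y ∂ν, ∫⁻ x, b (x, y) * u x * (f y ^ 2 / w y) ∂μ ≤ B * f y ^ 2 := by
    filter_upwards [hB, hw0] with y hy ⟨h0, htop⟩
    rw [lintegral_mul_const _ (by fun_prop)]
    calc _ ≤ B * w y * (f y ^ 2 / w y) := by gcongr
      _ = B * f y ^ 2 := by rw [mul_assoc, ENNReal.mul_div_cancel h0 htop]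
  calc ∫⁻ x, (∫⁻ y, b (x, y) * f y ∂ν) ^ 2 ∂μ
      ≤ A * ∫⁻ x, ∫⁻ y, b (x, y) * u x * (f y ^ 2 / w y) ∂ν ∂μ := by
        rw [← lintegral_const_mul' _ _ ENNReal.coe_ne_top]
        exact lintegral_mono_ae row
    _ = A * ∫⁻ y, ∫⁻ x, b (x, y) * u x * (f y ^ 2 / w y) ∂μ ∂ν := by
        rw [lintegral_lintegral_swap (by fun_prop)]
    _ ≤ A * ∫⁻ y, B * f y ^ 2 ∂ν := mul_le_mul_right (lintegral_mono_ae column) _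
    _ = A * B * ∫⁻ y, f y ^ 2 ∂ν := by
        rw [lintegral_const_mul' _ _ ENNReal.coe_ne_top, mul_assoc]

end L2BoundedKernel

section IntegralOperator

variable {X Y 𝕜 : Type*} [MeasurableSpace X] [MeasurableSpace Y] [RCLike 𝕜]
  {μ : Measure X} {ν : Measure Y} {k k' : X × Y → 𝕜} {M : ℝ≥0}
  {T T' : Lp 𝕜 2 ν →L[𝕜] Lp 𝕜 2 μ}

/-- `T` is the integral operator `L²(ν) → L²(μ)` with kernel `k`. Integrability of the sections is
part of the notion, since the Bochner integral of a non-integrable function is zero. -/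
def HasIntegralKernel (T : Lp 𝕜 2 ν →L[𝕜] Lp 𝕜 2 μ) (k : X × Y → 𝕜) : Prop :=
  ∀ f : Lp 𝕜 2 ν, ∀ᵐ x ∂μ,
    Integrable (fun y ↦ k (x, y) * f y) ν ∧ T f x = ∫ y, k (x, y) * f y ∂ν

lemma IsL2BoundedKernel.ae_integrable [SFinite ν] (hk : Measurable k)
    (hM : IsL2BoundedKernel μ ν (fun z ↦ ‖k z‖ₑ) M) (f : Lp 𝕜 2 ν) :
    ∀ᵐ x ∂μ, Integrable (fun y ↦ k (x, y) * f y) ν := by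
  have hf : Measurable f := (Lp.stronglyMeasurable f).measurable
  have measurable_section : Measurable fun x ↦ ∫⁻ y, ‖k (x, y)‖ₑ * ‖f y‖ₑ ∂ν :=
    (hk.enorm.mul (hf.comp measurable_snd).enorm).lintegral_prod_right'
  have finite_norm : eLpNorm (fun x ↦ ∫⁻ y, ‖k (x, y)‖ₑ * ‖f y‖ₑ ∂ν) 2 μ < ∞ := by
    refine (hM _ hf.enorm).trans_lt (ENNReal.mul_lt_top ENNReal.coe_lt_top ?_)
    rw [eLpNorm_enorm]
    exact Lp.eLpNorm_lt_top f
  have finite_sq : ∫⁻ x, (∫⁻ y, ‖k (x, y)‖ₑ * ‖f y‖ₑ ∂ν) ^ 2 ∂μ ≠ ∞ := by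
    simpa only [eLpNorm_two_sq, enorm_eq_self] using (ENNReal.pow_lt_top finite_norm (n := 2)).ne
  filter_upwards [ae_lt_top (measurable_section.pow_const 2) finite_sq] with x hx
  refine ⟨by fun_prop, ?_⟩
  simpa [HasFiniteIntegral, enorm_mul] using hx

lemma IsL2BoundedKernel.eLpNorm_integral_le (hM : IsL2BoundedKernel μ ν (fun z ↦ ‖k z‖ₑ) M)
    (f : Lp 𝕜 2 ν) : eLpNorm (fun x ↦ ∫ y, k (x, y) * f y ∂ν) 2 μ ≤ M * eLpNorm f 2 ν := by
  have hf : Measurable f := (Lp.stronglyMeasurable f).measurable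
  rw [← eLpNorm_enorm f]
  refine (eLpNorm_mono_enorm fun x ↦ ?_).trans (hM _ hf.enorm)
  simpa only [enorm_mul, enorm_eq_self] using
    enorm_integral_le_lintegral_enorm (μ := ν) fun y ↦ k (x, y) * f y

lemma IsL2BoundedKernel.memLp_integral [SFinite ν] (hk : Measurable k)
    (hM : IsL2BoundedKernel μ ν (fun z ↦ ‖k z‖ₑ) M) (f : Lp 𝕜 2 ν) :
    MemLp (fun x ↦ ∫ y, k (x, y) * f y ∂ν) 2 μ := by
  have hf : Measurable f := (Lp.stronglyMeasurable f).measurable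
  refine ⟨?_, (hM.eLpNorm_integral_le f).trans_lt
    (ENNReal.mul_lt_top ENNReal.coe_lt_top (Lp.eLpNorm_lt_top f))⟩
  exact (hk.mul (hf.comp measurable_snd)).stronglyMeasurable.integral_prod_right'
    |>.aestronglyMeasurable

lemma IsL2BoundedKernel.norm_toLp_integral_le [SFinite ν] (hk : Measurable k)
    (hM : IsL2BoundedKernel μ ν (fun z ↦ ‖k z‖ₑ) M) (f : Lp 𝕜 2 ν) :
    ‖(hM.memLp_integral hk f).toLp‖ ≤ M * ‖f‖ := by
  rw [Lp.norm_toLp, Lp.norm_def]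
  simpa using ENNReal.toReal_mono (ENNReal.mul_ne_top ENNReal.coe_ne_top (Lp.eLpNorm_ne_top f))
    (hM.eLpNorm_integral_le f)

theorem IsL2BoundedKernel.exists_hasIntegralKernel [SFinite ν] (hk : Measurable k)
    (hM : IsL2BoundedKernel μ ν (fun z ↦ ‖k z‖ₑ) M) :
    ∃ T : Lp 𝕜 2 ν →L[𝕜] Lp 𝕜 2 μ, HasIntegralKernel T k := by
  let L : Lp 𝕜 2 ν →ₗ[𝕜] Lp 𝕜 2 μ :=
    { toFun f := (hM.memLp_integral hk f).toLp
      map_add' f g := by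
        rw [← MemLp.toLp_add, MemLp.toLp_eq_toLp_iff]
        filter_upwards [hM.ae_integrable hk f, hM.ae_integrable hk g] with x hf hg
        rw [Pi.add_apply, ← integral_add hf hg]
        refine integral_congr_ae ?_
        filter_upwards [Lp.coeFn_add f g] with y hy
        rw [hy, Pi.add_apply, mul_add]
      map_smul' c f := by
        rw [RingHom.id_apply, ← MemLp.toLp_const_smul, MemLp.toLp_eq_toLp_iff]
        refine .of_forall fun x ↦ ?_
        rw [Pi.smul_apply, ← integral_smul]
        refine integral_congr_ae ?_
        filter_upwards [Lp.coeFn_smul c f] with y hy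
        rw [hy, Pi.smul_apply, mul_smul_comm] }
  refine ⟨L.mkContinuous M (hM.norm_toLp_integral_le hk), fun f ↦ ?_⟩
  filter_upwards [hM.ae_integrable hk f, (hM.memLp_integral hk f).coeFn_toLp] with x hint hx
  exact ⟨hint, hx⟩

lemma IsL2BoundedKernel.integrable_sesquilinear [SFinite ν] (hk : Measurable k)
    (hM : IsL2BoundedKernel μ ν (fun z ↦ ‖k z‖ₑ) M) (g : Lp 𝕜 2 μ) (f : Lp 𝕜 2 ν) :
    Integrable (fun z : X × Y ↦ k z * f z.2 * conj (g z.1)) (μ.prod ν) := by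
  have hf : Measurable f := (Lp.stronglyMeasurable f).measurable
  have hg : Measurable g := (Lp.stronglyMeasurable g).measurable
  have hmeas : Measurable fun z : X × Y ↦ k z * f z.2 * conj (g z.1) :=
    (hk.mul (hf.comp measurable_snd)).mul
      (RCLike.continuous_conj.measurable.comp (hg.comp measurable_fst))
  refine ⟨hmeas.aestronglyMeasurable, ?_⟩
  have measurable_section : Measurable fun x ↦ ∫⁻ y, ‖k (x, y)‖ₑ * ‖f y‖ₑ ∂ν :=
    (hk.enorm.mul (hf.comp measurable_snd).enorm).lintegral_prod_right'
  calc ∫⁻ z, ‖k z * f z.2 * conj (g z.1)‖ₑ ∂μ.prod ν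
      = ∫⁻ x, (∫⁻ y, ‖k (x, y)‖ₑ * ‖f y‖ₑ ∂ν) * ‖g x‖ₑ ∂μ := by
        rw [lintegral_prod _ hmeas.enorm.aemeasurable]
        simp only [enorm_mul, RCLike.enorm_conj, lintegral_mul_const' _ _ enorm_ne_top]
    _ ≤ eLpNorm (fun x ↦ ∫⁻ y, ‖k (x, y)‖ₑ * ‖f y‖ₑ ∂ν) 2 μ * eLpNorm (fun x ↦ ‖g x‖ₑ) 2 μ :=
        lintegral_mul_le_eLpNorm_two measurable_section.aemeasurable hg.enorm.aemeasurable
    _ ≤ M * eLpNorm f 2 ν * eLpNorm g 2 μ := by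
        rw [eLpNorm_enorm g, ← eLpNorm_enorm f]
        gcongr
        exact hM _ hf.enorm
    _ < ∞ := ENNReal.mul_lt_top
        (ENNReal.mul_lt_top ENNReal.coe_lt_top (Lp.eLpNorm_lt_top f)) (Lp.eLpNorm_lt_top g)

namespace HasIntegralKernel

lemma norm_le (hT : HasIntegralKernel T k) (hM : IsL2BoundedKernel μ ν (fun z ↦ ‖k z‖ₑ) M) :
    ‖T‖ ≤ M := by
  refine T.opNorm_le_bound M.2 fun f ↦ ?_
  rw [Lp.norm_def, Lp.norm_def, eLpNorm_congr_ae ((hT f).mono fun x hx ↦ hx.2)]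
  simpa using ENNReal.toReal_mono (ENNReal.mul_ne_top ENNReal.coe_ne_top (Lp.eLpNorm_ne_top f))
    (hM.eLpNorm_integral_le f)

lemma congr_ae [SFinite ν] (hT : HasIntegralKernel T k) (hk : k =ᵐ[μ.prod ν] k') :
    HasIntegralKernel T k' := by
  intro f
  filter_upwards [hT f, Measure.ae_ae_of_ae_prod hk] with x ⟨hint, hx⟩ hxk
  have hsection : (fun y ↦ k (x, y) * f y) =ᵐ[ν] fun y ↦ k' (x, y) * f y := by
    filter_upwards [hxk] with y hy
    rw [hy]
  exact ⟨hint.congr hsection, hx.trans (integral_congr_ae hsection)⟩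

lemma add (hT : HasIntegralKernel T k) (hT' : HasIntegralKernel T' k') :
    HasIntegralKernel (T + T') (k + k') := by
  intro f
  filter_upwards [hT f, hT' f, Lp.coeFn_add (T f) (T' f)] with x ⟨hint, hx⟩ ⟨hint', hx'⟩ hadd
  rw [add_apply, hadd, Pi.add_apply, hx, hx', ← integral_add hint hint']
  simp only [Pi.add_apply, add_mul]
  exact ⟨hint.add hint', trivial⟩

lemma smul (hT : HasIntegralKernel T k) (c : 𝕜) : HasIntegralKernel (c • T) (c • k) := by
  intro f
  filter_upwards [hT f, Lp.coeFn_smul c (T f)] with x ⟨hint, hx⟩ hsmul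
  rw [smul_apply, hsmul, Pi.smul_apply, hx, ← integral_smul]
  simp only [Pi.smul_apply, smul_mul_assoc]
  exact ⟨hint.smul c, trivial⟩

lemma sub (hT : HasIntegralKernel T k) (hT' : HasIntegralKernel T' k') :
    HasIntegralKernel (T - T') (k - k') := by
  simpa [sub_eq_add_neg] using hT.add (hT'.smul (-1))

theorem adjoint_eq [SFinite μ] [SFinite ν] {S : Lp 𝕜 2 μ →L[𝕜] Lp 𝕜 2 ν}
    (hT : HasIntegralKernel T k) (hS : HasIntegralKernel S fun z ↦ conj (k z.swap))
    (hk : Measurable k) (hM : IsL2BoundedKernel μ ν (fun z ↦ ‖k z‖ₑ) M) :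
    S = ContinuousLinearMap.adjoint T := by
  refine (ContinuousLinearMap.eq_adjoint_iff S T).mpr fun g f ↦ ?_
  calc inner 𝕜 (S g) f = ∫ y, ∫ x, k (x, y) * f y * conj (g x) ∂μ ∂ν := by
        refine integral_congr_ae ((hS g).mono fun y hy ↦ ?_)
        simp only [hy.2, RCLike.inner_apply, ← integral_conj, ← integral_const_mul, map_mul,
          RCLike.conj_conj, Prod.swap_prod_mk]
        exact integral_congr_ae (.of_forall fun x ↦ by ring)
    _ = ∫ x, ∫ y, k (x, y) * f y * conj (g x) ∂ν ∂μ :=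
        (integral_integral_swap (hM.integrable_sesquilinear hk g f)).symm
    _ = inner 𝕜 g (T f) := by
        refine (integral_congr_ae ((hT f).mono fun x hx ↦ ?_)).symm
        simp only [hx.2, RCLike.inner_apply, integral_mul_const]

theorem isSelfAdjoint [SFinite μ] {T : Lp 𝕜 2 μ →L[𝕜] Lp 𝕜 2 μ} {k : X × X → 𝕜}
    (hT : HasIntegralKernel T k) (hk : Measurable k)
    (hM : IsL2BoundedKernel μ μ (fun z ↦ ‖k z‖ₑ) M) (hsymm : ∀ z, conj (k z.swap) = k z) :
    IsSelfAdjoint T := by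
  rw [ContinuousLinearMap.isSelfAdjoint_iff', eq_comm]
  exact hT.adjoint_eq (by simpa only [hsymm] using hT) hk hM

end HasIntegralKernel

end IntegralOperator

section DenseIndicators

variable {α 𝕜 : Type*} {m : MeasurableSpace α} {ρ : Measure α} [RCLike 𝕜] {p : ℝ≥0∞} [Fact (1 ≤ p)]
  {V : Submodule 𝕜 (Lp 𝕜 p ρ)}

lemma tendsto_indicatorConstLp_iUnion (hp : p ≠ ∞) {s : ℕ → Set α} (hs : ∀ n, MeasurableSet (s n))
    (hmono : Monotone s) (hfin : ρ (⋃ n, s n) ≠ ∞) (c : 𝕜) :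
    Tendsto (fun n ↦ indicatorConstLp p (hs n)
      (ne_top_of_le_ne_top hfin (measure_mono (subset_iUnion s n))) c) atTop
      (𝓝 (indicatorConstLp p (.iUnion hs) hfin c)) := by
  refine tendsto_indicatorConstLp_set hp ?_
  have symmDiff_eq (n : ℕ) : ρ (symmDiff (s n) (⋃ n, s n)) = ρ (⋃ n, s n) - ρ (s n) := by
    rw [symmDiff_of_le (subset_iUnion s n), measure_sdiff (subset_iUnion s n)
      (hs n).nullMeasurableSet (ne_top_of_le_ne_top hfin (measure_mono (subset_iUnion s n)))]
  simp only [symmDiff_eq]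
  simpa using ENNReal.Tendsto.sub tendsto_const_nhds (tendsto_measure_iUnion_atTop (μ := ρ) hmono)
    (.inl hfin)

lemma indicatorConstLp_iUnion_mem (hp : p ≠ ∞) (hV : IsClosed (V : Set (Lp 𝕜 p ρ)))
    {s : ℕ → Set α} (hs : ∀ n, MeasurableSet (s n)) (hmono : Monotone s)
    (hfin : ρ (⋃ n, s n) ≠ ∞) {c : 𝕜}
    (hsV : ∀ n, indicatorConstLp p (hs n)
      (ne_top_of_le_ne_top hfin (measure_mono (subset_iUnion s n))) c ∈ V) :
    indicatorConstLp p (.iUnion hs) hfin c ∈ V :=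
  hV.mem_of_tendsto (tendsto_indicatorConstLp_iUnion hp hs hmono hfin c) (.of_forall hsV)

lemma indicatorConstLp_iUnion_mem_of_disjoint (hp : p ≠ ∞) (hV : IsClosed (V : Set (Lp 𝕜 p ρ)))
    {s : ℕ → Set α} (hs : ∀ n, MeasurableSet (s n)) (hdisj : Pairwise (Function.onFun Disjoint s))
    (hfin : ρ (⋃ n, s n) ≠ ∞) {c : 𝕜}
    (hsV : ∀ n, indicatorConstLp p (hs n)
      (ne_top_of_le_ne_top hfin (measure_mono (subset_iUnion s n))) c ∈ V) :
    indicatorConstLp p (.iUnion hs) hfin c ∈ V := by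
  have measurable_accumulate (n : ℕ) : MeasurableSet (accumulate s n) :=
    .biUnion (to_countable _) fun i _ ↦ hs i
  have accumulate_ne_top (n : ℕ) : ρ (accumulate s n) ≠ ∞ :=
    ne_top_of_le_ne_top hfin (measure_mono (accumulate_subset_iUnion n))
  have accumulate_mem (n : ℕ) :
      indicatorConstLp p (measurable_accumulate n) (accumulate_ne_top n) c ∈ V := by
    induction n with
    | zero => simpa only [accumulate_zero_nat] using hsV 0
    | succ n ih =>
      simp only [accumulate_succ]
      rw [indicatorConstLp_disjoint_union (measurable_accumulate n) (hs (n + 1))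
        (accumulate_ne_top n) (ne_top_of_le_ne_top hfin (measure_mono (subset_iUnion s _)))
        (disjoint_accumulate hdisj n.lt_succ_self)]
      exact V.add_mem ih (hsV (n + 1))
  have := indicatorConstLp_iUnion_mem hp hV measurable_accumulate monotone_accumulate
    (by rwa [iUnion_accumulate]) accumulate_mem
  simpa only [iUnion_accumulate] using this

lemma indicatorConstLp_inter_mem_of_isPiSystem (hp : p ≠ ∞)
    (hV : IsClosed (V : Set (Lp 𝕜 p ρ))) {𝒮 : Set (Set α)}
    (hgen : m = MeasurableSpace.generateFrom 𝒮) (hpi : IsPiSystem 𝒮) {R : Set α}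
    (hR : MeasurableSet R) (hfin : ρ R ≠ ∞) {c : 𝕜} (hRV : indicatorConstLp p hR hfin c ∈ V)
    (h𝒮V : ∀ s ∈ 𝒮, ∀ hs : MeasurableSet s,
      indicatorConstLp p (hs.inter hR) (measure_inter_ne_top_of_right_ne_top hfin) c ∈ V)
    {s : Set α} (hs : MeasurableSet s) :
    indicatorConstLp p (hs.inter hR) (measure_inter_ne_top_of_right_ne_top hfin) c ∈ V := by
  induction s, hs using MeasurableSpace.induction_on_inter hgen hpi with
  | empty => simpa only [empty_inter, indicatorConstLp_empty] using V.zero_mem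
  | basic s hs => exact h𝒮V s hs (hgen ▸ .basic s hs)
  | compl s hs ih =>
    have split := indicatorConstLp_disjoint_union (p := p) (hs.inter hR) (hs.compl.inter hR)
      (measure_inter_ne_top_of_right_ne_top hfin) (measure_inter_ne_top_of_right_ne_top hfin)
      (disjoint_compl_right.mono inter_subset_left inter_subset_left) c
    simp only [← union_inter_distrib_right, union_compl_self, univ_inter] at split
    rw [← V.add_mem_iff_right ih, ← split]
    exact hRV
  | iUnion s hdisj hs ih =>
    simp only [iUnion_inter]
    exact indicatorConstLp_iUnion_mem_of_disjoint hp hV (fun n ↦ (hs n).inter hR)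
      (fun i j hij ↦ (hdisj hij).mono inter_subset_left inter_subset_left) _ ih

lemma eq_top_of_indicatorConstLp_mem (hp : p ≠ ∞) (hV : IsClosed (V : Set (Lp 𝕜 p ρ)))
    (h : ∀ (s : Set α) (hs : MeasurableSet s) (hfin : ρ s ≠ ∞),
      indicatorConstLp p hs hfin (1 : 𝕜) ∈ V) : V = ⊤ := by
  refine eq_top_iff.mpr fun f _ ↦ ?_
  induction f using Lp.induction hp with
  | indicatorConst c hs hfin =>
    have : indicatorConstLp p hs hfin.ne c = c • indicatorConstLp p hs hfin.ne (1 : 𝕜) := by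
      rw [indicatorConstLp, indicatorConstLp, ← MemLp.toLp_const_smul]
      congr 1
      ext; simp [Set.indicator]
    rw [Lp.simpleFunc.coe_indicatorConst, this]
    exact V.smul_mem c (h _ hs hfin.ne)
  | add hf hg _ ihf ihg => exact V.add_mem (ihf trivial) (ihg trivial)
  | isClosed => simpa using hV

theorem eq_top_of_indicatorConstLp_prod_mem {X Y : Type*} [MeasurableSpace X] [MeasurableSpace Y]
    {μ : Measure X} {ν : Measure Y} [SigmaFinite μ] [SigmaFinite ν]
    {V : Submodule 𝕜 (Lp 𝕜 p (μ.prod ν))} (hp : p ≠ ∞)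
    (hV : IsClosed (V : Set (Lp 𝕜 p (μ.prod ν))))
    (hrect : ∀ {s : Set X} {t : Set Y} (hs : MeasurableSet s) (ht : MeasurableSet t)
      (hst : μ.prod ν (s ×ˢ t) ≠ ∞), μ s ≠ ∞ → ν t ≠ ∞ →
      indicatorConstLp p (hs.prod ht) hst (1 : 𝕜) ∈ V) : V = ⊤ := by
  refine eq_top_of_indicatorConstLp_mem hp hV fun E hE hfin ↦ ?_
  let R (n : ℕ) : Set (X × Y) := spanningSets μ n ×ˢ spanningSets ν n
  have measurable_R (n : ℕ) : MeasurableSet (R n) :=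
    (measurableSet_spanningSets μ n).prod (measurableSet_spanningSets ν n)
  have R_ne_top (n : ℕ) : μ.prod ν (R n) ≠ ∞ := by
    rw [Measure.prod_prod]
    exact ENNReal.mul_ne_top (measure_spanningSets_lt_top μ n).ne
      (measure_spanningSets_lt_top ν n).ne
  have E_eq : ⋃ n, E ∩ R n = E := by
    rw [← inter_iUnion, iUnion_prod_of_monotone (monotone_spanningSets μ)
      (monotone_spanningSets ν), iUnion_spanningSets, iUnion_spanningSets, univ_prod_univ,
      inter_univ]
  have E_inter_mem (n : ℕ) : indicatorConstLp p (hE.inter (measurable_R n))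
      (measure_inter_ne_top_of_right_ne_top (R_ne_top n)) (1 : 𝕜) ∈ V := by
    refine indicatorConstLp_inter_mem_of_isPiSystem hp hV generateFrom_prod.symm isPiSystem_prod
      (measurable_R n) (R_ne_top n) (hrect (measurableSet_spanningSets μ n)
        (measurableSet_spanningSets ν n) (R_ne_top n) (measure_spanningSets_lt_top μ n).ne
        (measure_spanningSets_lt_top ν n).ne) ?_ hE
    rintro _ ⟨s, hs, t, ht, rfl⟩ _
    simp only [R, prod_inter_prod]
    exact hrect (hs.inter (measurableSet_spanningSets μ n))
      (ht.inter (measurableSet_spanningSets ν n)) _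
      (measure_inter_ne_top_of_right_ne_top (measure_spanningSets_lt_top μ n).ne)
      (measure_inter_ne_top_of_right_ne_top (measure_spanningSets_lt_top ν n).ne)
  have monotone_E_inter : Monotone fun n ↦ E ∩ R n := fun m n hmn ↦
    inter_subset_inter_right E (prod_mono (monotone_spanningSets μ hmn)
      (monotone_spanningSets ν hmn))
  have := indicatorConstLp_iUnion_mem hp hV (fun n ↦ hE.inter (measurable_R n)) monotone_E_inter
    (by rwa [E_eq]) E_inter_mem
  simpa only [E_eq] using this

end DenseIndicators

section HilbertSchmidt

variable {X Y 𝕜 : Type*} [MeasurableSpace X] [MeasurableSpace Y] [RCLike 𝕜]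
  {μ : Measure X} {ν : Measure Y} {k : X × Y → 𝕜}
  {T S : Lp 𝕜 2 ν →L[𝕜] Lp 𝕜 2 μ}

namespace HasIntegralKernel

lemma zero : HasIntegralKernel (0 : Lp 𝕜 2 ν →L[𝕜] Lp 𝕜 2 μ) 0 := by
  intro f
  filter_upwards [Lp.coeFn_zero 𝕜 2 μ] with x hx
  simpa using hx

lemma unique (hT : HasIntegralKernel T k) (hS : HasIntegralKernel S k) : T = S := by
  ext1 f
  apply Lp.ext
  filter_upwards [hT f, hS f] with x hTx hSx
  rw [hTx.2, hSx.2]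

lemma rankOne (g : Lp 𝕜 2 μ) (h : Lp 𝕜 2 ν) :
    HasIntegralKernel (InnerProductSpace.rankOne 𝕜 g h) fun z ↦ g z.1 * conj (h z.2) := by
  intro f
  have hint : Integrable (fun y ↦ conj (h y) * f y) ν := by
    simpa only [RCLike.inner_apply, mul_comm] using L2.integrable_inner (𝕜 := 𝕜) h f
  filter_upwards [Lp.coeFn_smul (inner 𝕜 h f) g] with x hx
  simp only [mul_assoc, InnerProductSpace.rankOne_apply, hx, Pi.smul_apply, integral_const_mul]
  refine ⟨hint.const_mul _, ?_⟩
  simp only [L2.inner_def, RCLike.inner_apply, smul_eq_mul, mul_comm]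

theorem isCompactOperator_of_approx (hT : HasIntegralKernel T k)
    (happrox : ∀ ε : ℝ≥0, 0 < ε → ∃ (S : Lp 𝕜 2 ν →L[𝕜] Lp 𝕜 2 μ) (k' : X × Y → 𝕜),
      HasIntegralKernel S k' ∧ IsCompactOperator S ∧
        IsL2BoundedKernel μ ν (fun z ↦ ‖k z - k' z‖ₑ) ε) : IsCompactOperator T := by
  refine isClosed_setOfPred_isCompactOperator.closure_subset
    (Metric.mem_closure_iff.mpr fun ε hε ↦ ?_)
  obtain ⟨S, k', hS, hcompact, hbound⟩ := happrox ⟨ε / 2, by positivity⟩ (half_pos hε)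
  exact ⟨S, hcompact, (dist_eq_norm T S).trans_lt
    (((hT.sub hS).norm_le hbound).trans_lt (half_lt_self hε))⟩

end HasIntegralKernel

lemma isL2BoundedKernel_enorm_of_memLp [SFinite ν] (hk : Measurable k)
    (hmem : MemLp k 2 (μ.prod ν)) :
    IsL2BoundedKernel μ ν (fun z ↦ ‖k z‖ₑ) (eLpNorm k 2 (μ.prod ν)).toNNReal :=
  isL2BoundedKernel_of_eLpNorm_le hk.enorm <| by
    rw [eLpNorm_enorm, ENNReal.coe_toNNReal hmem.eLpNorm_ne_top]

lemma isCompactOperator_rankOne {E F : Type*} [NormedAddCommGroup E] [InnerProductSpace 𝕜 E]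
    [NormedAddCommGroup F] [InnerProductSpace 𝕜 F] (x : E) (y : F) :
    IsCompactOperator (InnerProductSpace.rankOne 𝕜 x y) :=
  (isCompactOperator_of_locallyCompactSpace_rng
    (ContinuousLinearMap.toSpanSingleton 𝕜 x)).comp_clm (innerSL 𝕜 y)

/-- The square-integrable kernels whose integral operator is compact; in fact all of
`L²(μ.prod ν)`. -/
def compactKernels (𝕜 : Type*) [RCLike 𝕜] (μ : Measure X) (ν : Measure Y) [SFinite ν] :
    Submodule 𝕜 (Lp 𝕜 2 (μ.prod ν)) where
  carrier := {K | ∃ T : Lp 𝕜 2 ν →L[𝕜] Lp 𝕜 2 μ, HasIntegralKernel T K ∧ IsCompactOperator T}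
  zero_mem' := ⟨0, HasIntegralKernel.zero.congr_ae (Lp.coeFn_zero _ _ _).symm,
    isCompactOperator_zero⟩
  add_mem' := by
    rintro K K' ⟨T, hT, hTc⟩ ⟨T', hT', hTc'⟩
    exact ⟨T + T', (hT.add hT').congr_ae (Lp.coeFn_add K K').symm, hTc.add hTc'⟩
  smul_mem' := by
    rintro c K ⟨T, hT, hTc⟩
    exact ⟨c • T, (hT.smul c).congr_ae (Lp.coeFn_smul c K).symm, hTc.smul c⟩

lemma isClosed_compactKernels [SFinite ν] :
    IsClosed (compactKernels 𝕜 μ ν : Set (Lp 𝕜 2 (μ.prod ν))) := by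
  refine isClosed_of_closure_subset fun K hK ↦ ?_
  have hKmeas : Measurable K := (Lp.stronglyMeasurable K).measurable
  obtain ⟨T, hT⟩ := (isL2BoundedKernel_enorm_of_memLp hKmeas (Lp.memLp K)).exists_hasIntegralKernel
    hKmeas
  refine ⟨T, hT, hT.isCompactOperator_of_approx fun ε hε ↦ ?_⟩
  obtain ⟨K', ⟨S, hS, hcompact⟩, hdist⟩ := EMetric.mem_closure_iff.mp hK ε (by simpa using hε)
  refine ⟨S, K', hS, hcompact, isL2BoundedKernel_of_eLpNorm_le
    (hKmeas.sub (Lp.stronglyMeasurable K').measurable).enorm ?_⟩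
  rw [Lp.edist_def] at hdist
  exact (eLpNorm_enorm _).trans_le hdist.le

lemma indicatorConstLp_prod_mem_compactKernels [SFinite ν] {s : Set X}
    {t : Set Y} (hs : MeasurableSet s) (ht : MeasurableSet t) (hst : μ.prod ν (s ×ˢ t) ≠ ∞)
    (hμs : μ s ≠ ∞) (hνt : ν t ≠ ∞) :
    indicatorConstLp 2 (hs.prod ht) hst (1 : 𝕜) ∈ compactKernels 𝕜 μ ν := by
  let g := indicatorConstLp 2 hs hμs (1 : 𝕜)
  let h := indicatorConstLp 2 ht hνt (1 : 𝕜)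
  refine ⟨_, (HasIntegralKernel.rankOne g h).congr_ae ?_, isCompactOperator_rankOne g h⟩
  have hg : g =ᵐ[μ] s.indicator fun _ ↦ 1 := indicatorConstLp_coeFn
  have hh : h =ᵐ[ν] t.indicator fun _ ↦ 1 := indicatorConstLp_coeFn
  filter_upwards [Measure.quasiMeasurePreserving_fst.ae hg,
    Measure.quasiMeasurePreserving_snd.ae hh, indicatorConstLp_coeFn (p := 2) (hs := hs.prod ht)
      (hμs := hst) (c := (1 : 𝕜))] with z hz₁ hz₂ hz
  rw [hz₁, hz₂, hz]
  by_cases h₁ : z.1 ∈ s <;> by_cases h₂ : z.2 ∈ t <;> simp [Set.indicator, h₁, h₂]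

theorem compactKernels_eq_top [SigmaFinite μ] [SigmaFinite ν] : compactKernels 𝕜 μ ν = ⊤ :=
  eq_top_of_indicatorConstLp_prod_mem (by norm_num) isClosed_compactKernels
    indicatorConstLp_prod_mem_compactKernels

theorem HasIntegralKernel.isCompactOperator_of_memLp [SigmaFinite μ] [SigmaFinite ν]
    (hT : HasIntegralKernel T k) (hk : MemLp k 2 (μ.prod ν)) : IsCompactOperator T := by
  have mem_compactKernels : hk.toLp ∈ compactKernels 𝕜 μ ν := by simp [compactKernels_eq_top]
  obtain ⟨S, hS, hcompact⟩ := mem_compactKernels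
  rwa [hT.unique (hS.congr_ae hk.coeFn_toLp)]

end HilbertSchmidt

section Truncation

variable {α E : Type*} [NormedAddCommGroup E] {f : α → E} {r : ℝ}

/-- The function `f` cut off to zero where its norm exceeds `N`. -/
def truncation (f : α → E) (N : ℝ≥0) : α → E := {x | ‖f x‖ₑ ≤ N}.indicator f

lemma measurable_truncation [MeasurableSpace α] [MeasurableSpace E] [OpensMeasurableSpace E]
    (hf : Measurable f) (N : ℝ≥0) : Measurable (truncation f N) :=
  hf.indicator (measurableSet_le hf.enorm measurable_const)

lemma enorm_truncation_le (N : ℝ≥0) (x : α) : ‖truncation f N x‖ₑ ≤ N := by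
  by_cases hx : x ∈ {x | ‖f x‖ₑ ≤ N}
  · rw [truncation, indicator_of_mem hx]; exact hx
  · rw [truncation, indicator_of_notMem hx]; simp

lemma enorm_sub_truncation_le {N : ℝ≥0} (hN : 0 < N) (hr : 1 ≤ r) (x : α) :
    ‖f x - truncation f N x‖ₑ ≤ (N ^ (1 - r) : ℝ≥0) * ‖f x‖ₑ ^ r := by
  by_cases hx : x ∈ {x | ‖f x‖ₑ ≤ N}
  · rw [truncation, indicator_of_mem hx]; simp
  · have hlarge : (N : ℝ≥0∞) ≤ ‖f x‖ₑ := (not_le.mp hx).le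
    rw [truncation, indicator_of_notMem hx, sub_zero, ENNReal.coe_rpow_of_ne_zero hN.ne']
    calc ‖f x‖ₑ = ‖f x‖ₑ ^ (1 - r) * ‖f x‖ₑ ^ r := by
          rw [← ENNReal.rpow_add _ _ ((ENNReal.coe_pos.mpr hN).trans_le hlarge).ne' enorm_ne_top]
          simp
      _ ≤ N ^ (1 - r) * ‖f x‖ₑ ^ r := by
          rw [← neg_sub r 1, ENNReal.rpow_neg, ENNReal.rpow_neg]
          gcongr

end Truncation

section CompactByTruncation

variable {X Y 𝕜 : Type*} [MeasurableSpace X] [MeasurableSpace Y] [RCLike 𝕜]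
  {μ : Measure X} {ν : Measure Y} {k : X × Y → 𝕜} {M : ℝ≥0} {r : ℝ}

lemma le_one_add_rpow {a : ℝ≥0∞} (hr : 1 ≤ r) : a ≤ 1 + a ^ r := by
  rcases le_total a 1 with ha | ha
  · exact ha.trans le_self_add
  · exact (ENNReal.le_rpow_self_of_one_le ha hr).trans le_add_self

lemma IsL2BoundedKernel.exists_of_rpow [IsFiniteMeasure μ] [IsFiniteMeasure ν]
    (hk : Measurable k) (hr : 1 ≤ r) (hM : IsL2BoundedKernel μ ν (fun z ↦ ‖k z‖ₑ ^ r) M) :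
    ∃ M', IsL2BoundedKernel μ ν (fun z ↦ ‖k z‖ₑ) M' := by
  have one_bounded : IsL2BoundedKernel μ ν (fun _ ↦ 1)
      (eLpNorm (fun _ : X × Y ↦ (1 : ℝ≥0∞)) 2 (μ.prod ν)).toNNReal :=
    isL2BoundedKernel_of_eLpNorm_le measurable_const (ENNReal.coe_toNNReal
      (memLp_const_enorm ENNReal.one_ne_top).eLpNorm_ne_top).ge
  exact ⟨_, (one_bounded.add measurable_const (hk.enorm.pow_const r) hM).mono
    (.of_forall fun z ↦ le_one_add_rpow hr)⟩

lemma exists_rpow_neg_mul_le (hr : 1 < r) (M : ℝ≥0) {ε : ℝ≥0} (hε : 0 < ε) :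
    ∃ N : ℝ≥0, 0 < N ∧ N ^ (1 - r) * M ≤ ε := by
  have htendsto : Tendsto (fun N : ℝ ↦ N ^ (1 - r) * M) atTop (𝓝 0) := by
    simpa using (tendsto_rpow_neg_atTop (sub_pos.mpr hr)).mul_const (M : ℝ)
  obtain ⟨N, hNε, hN⟩ :=
    ((htendsto.eventually_le_const (NNReal.coe_pos.mpr hε)).and (eventually_gt_atTop 0)).exists
  exact ⟨⟨N, hN.le⟩, hN, by exact_mod_cast hNε⟩

theorem HasIntegralKernel.isCompactOperator_of_rpow [IsFiniteMeasure μ] [IsFiniteMeasure ν]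
    {T : Lp 𝕜 2 ν →L[𝕜] Lp 𝕜 2 μ} (hT : HasIntegralKernel T k) (hk : Measurable k) (hr : 1 < r)
    (hM : IsL2BoundedKernel μ ν (fun z ↦ ‖k z‖ₑ ^ r) M) : IsCompactOperator T := by
  refine hT.isCompactOperator_of_approx fun ε hε ↦ ?_
  obtain ⟨N, hN, hNε⟩ := exists_rpow_neg_mul_le hr M hε
  have truncation_memLp : MemLp (truncation k N) 2 (μ.prod ν) :=
    .of_enorm_bound (measurable_truncation hk N).aestronglyMeasurable ENNReal.coe_ne_top
      (.of_forall fun z ↦ enorm_truncation_le N z)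
  obtain ⟨S, hS⟩ := (isL2BoundedKernel_enorm_of_memLp (measurable_truncation hk N)
    truncation_memLp).exists_hasIntegralKernel (measurable_truncation hk N)
  exact ⟨S, truncation k N, hS, hS.isCompactOperator_of_memLp truncation_memLp,
    ((hM.const_mul _).mono (.of_forall fun z ↦ enorm_sub_truncation_le hN hr.le z)).mono_bound hNε⟩

end CompactByTruncation

section Branch

lemma cos_half_four_mul_arctan (t : ℝ) : cos (4 * arctan t / 2) = (1 - t ^ 2) / (1 + t ^ 2) := by
  rw [show 4 * arctan t / 2 = 2 * arctan t by ring, cos_two_mul, cos_sq_arctan]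
  field_simp
  ring

lemma sin_half_four_mul_arctan (t : ℝ) : sin (4 * arctan t / 2) = 2 * t / (1 + t ^ 2) := by
  rw [show 4 * arctan t / 2 = 2 * arctan t by ring, sin_two_mul, sin_arctan, cos_arctan]
  field_simp
  rw [sq_sqrt (by positivity)]

lemma four_mul_arctan_tan_div_four {x : ℝ} (hx : x ∈ Ioo 0 (2 * π)) :
    4 * arctan (tan (x / 4)) = x := by
  rw [arctan_tan (by linarith [hx.1, pi_pos]) (by linarith [hx.2])]
  ring

lemma tan_div_four_pos {x : ℝ} (hx : x ∈ Ioo 0 (2 * π)) : 0 < tan (x / 4) :=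
  tan_pos_of_pos_of_lt_pi_div_two (by linarith [hx.1]) (by linarith [hx.2])

/-- The numerator of `Fm (4 * arctan s) (4 * arctan t)`, up to a factor `4`. -/
def branchPoly (s t : ℝ) : ℝ := (1 - (s * t) ^ 2) ^ 2 - 4 * s * t * (1 + s ^ 2) * (1 + t ^ 2)

lemma Fm_four_mul_arctan (s t : ℝ) :
    Fm (4 * arctan s) (4 * arctan t) =
      4 * branchPoly s t / ((1 + s ^ 2) * (1 + t ^ 2)) ^ 2 := by
  simp only [Fm, branchPoly, cos_half_four_mul_arctan, sin_half_four_mul_arctan]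
  field_simp
  ring

lemma cos_half_add_cos_half_four_mul_arctan (s t : ℝ) :
    cos (4 * arctan s / 2) + cos (4 * arctan t / 2) =
      2 * (1 - (s * t) ^ 2) / ((1 + s ^ 2) * (1 + t ^ 2)) := by
  simp only [cos_half_four_mul_arctan]
  field_simp
  ring

lemma Fm_four_mul_arctan_pos_iff {s t : ℝ} :
    0 < Fm (4 * arctan s) (4 * arctan t) ↔ 0 < branchPoly s t := by
  rw [Fm_four_mul_arctan, div_pos_iff_of_pos_right (by positivity), mul_pos_iff_of_pos_left
    four_pos]

/-- `τ` is the zero of `t ↦ Fm (4 * arctan s) (4 * arctan t)` on `(0, s⁻¹)`, the range where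
`cos (x / 2) + cos (y / 2)` is positive. -/
structure IsBranchRoot (s τ : ℝ) : Prop where
  pos : 0 < τ
  mul_lt_one : s * τ < 1
  branchPoly_eq_zero : branchPoly s τ = 0

variable {s t τ : ℝ}

lemma branchPoly_anti (hs : 0 ≤ s) (ht : 0 ≤ t) (htτ : t ≤ τ) (hsτ : s * τ ≤ 1) :
    branchPoly s τ ≤ branchPoly s t := by
  have hτ : 0 ≤ τ := ht.trans htτ
  have hsq : (s * τ) ^ 2 ≤ 1 := pow_le_one₀ (by positivity) hsτ
  unfold branchPoly
  gcongr

lemma exists_isBranchRoot (hs : 0 < s) : ∃ τ, IsBranchRoot s τ := by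
  have hcont : ContinuousOn (branchPoly s) (Icc 0 s⁻¹) := by unfold branchPoly; fun_prop
  have hzero : 0 < branchPoly s 0 := by simp [branchPoly]
  have hinv : branchPoly s s⁻¹ < 0 := by
    have : 0 < 4 * (1 + s ^ 2) * (1 + s⁻¹ ^ 2) := by positivity
    simpa [branchPoly, hs.ne', mul_assoc] using this
  obtain ⟨τ, ⟨hτ, hsτ⟩, hroot⟩ :=
    intermediate_value_Ioo' (inv_pos.mpr hs).le hcont ⟨hinv, hzero⟩
  exact ⟨τ, hτ, by simpa [hs.ne'] using mul_lt_mul_of_pos_left hsτ hs, hroot⟩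

namespace IsBranchRoot

lemma lt_of_branchPoly_pos (h : IsBranchRoot s τ) (hs : 0 ≤ s) (hst : s * t ≤ 1)
    (hpos : 0 < branchPoly s t) : t < τ := by
  contrapose! hpos
  exact (branchPoly_anti hs h.pos.le hpos hst).trans h.branchPoly_eq_zero.le

lemma four_mul_le_one (h : IsBranchRoot s τ) (hs : 0 < s) :
    4 * s * τ * (1 + s ^ 2) * (1 + τ ^ 2) ≤ 1 := by
  have hτ := h.pos
  have hsq : (s * τ) ^ 2 ≤ 1 := pow_le_one₀ (by positivity) h.mul_lt_one.le
  rw [← sub_eq_zero.mp h.branchPoly_eq_zero]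
  exact pow_le_one₀ (by linarith) (by linarith [sq_nonneg (s * τ)])

lemma mul_le_quarter (h : IsBranchRoot s τ) (hs : 0 < s) : s * τ ≤ 1 / 4 := by
  have hfactor : 1 ≤ (1 + s ^ 2) * (1 + τ ^ 2) :=
    one_le_mul_of_one_le_of_one_le (by simp [sq_nonneg]) (by simp [sq_nonneg])
  linarith [h.four_mul_le_one hs, mul_le_mul_of_nonneg_left hfactor (mul_pos hs h.pos).le]

lemma one_sub_div_le (h : IsBranchRoot s τ) (hs : 0 < s) (ht : 0 < t) (htτ : t < τ) :
    1 - t / τ ≤ 4 * branchPoly s t := by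
  have hτ := h.pos
  have hsτ_sq : (s * τ) ^ 2 ≤ (1 / 4) ^ 2 := by gcongr; exact h.mul_le_quarter hs
  have hst_sq : (s * t) ^ 2 ≤ (s * τ) ^ 2 := by gcongr
  have hsquare : 1 ≤ 4 * (1 - (s * t) ^ 2) ^ 2 := by nlinarith
  have hproduct : 4 * s * t * (1 + s ^ 2) * (1 + t ^ 2) ≤ t / τ * (1 - (s * t) ^ 2) ^ 2 := calc
    4 * s * t * (1 + s ^ 2) * (1 + t ^ 2)
      ≤ 4 * s * t * (1 + s ^ 2) * (1 + τ ^ 2) := by gcongr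
    _ = t / τ * (4 * s * τ * (1 + s ^ 2) * (1 + τ ^ 2)) := by field_simp
    _ = t / τ * (1 - (s * τ) ^ 2) ^ 2 := by rw [sub_eq_zero.mp h.branchPoly_eq_zero]
    _ ≤ t / τ * (1 - (s * t) ^ 2) ^ 2 := by gcongr; linarith
  calc 1 - t / τ ≤ (1 - t / τ) * (4 * (1 - (s * t) ^ 2) ^ 2) :=
        le_mul_of_one_le_right (sub_nonneg.mpr ((div_le_one hτ).mpr htτ.le)) hsquare
    _ ≤ 4 * branchPoly s t := by rw [branchPoly]; linarith

lemma K1_le (h : IsBranchRoot s τ) (hs : 0 < s) (ht : 0 < t) (htτ : t < τ) :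
    K1 (4 * arctan s) (4 * arctan t) ≤
      4 * ((1 + s ^ 2) * (1 + t ^ 2)) * (1 - t / τ) ^ (-(1 / 2) : ℝ) := by
  have hgap : 0 < 1 - t / τ := sub_pos.mpr ((div_lt_one h.pos).mpr htτ)
  have hlower : (1 - t / τ) / ((1 + s ^ 2) * (1 + t ^ 2)) ^ 2 ≤
      Fm (4 * arctan s) (4 * arctan t) := by
    rw [Fm_four_mul_arctan]
    gcongr
    exact h.one_sub_div_le hs ht htτ
  have hpos : 0 < Fm (4 * arctan s) (4 * arctan t) := lt_of_lt_of_le (by positivity) hlower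
  rw [K1, if_pos hpos]
  calc 4 / √(Fm (4 * arctan s) (4 * arctan t))
      ≤ 4 / √((1 - t / τ) / ((1 + s ^ 2) * (1 + t ^ 2)) ^ 2) := by gcongr
    _ = 4 * ((1 + s ^ 2) * (1 + t ^ 2)) * (1 - t / τ) ^ (-(1 / 2) : ℝ) := by
        rw [sqrt_div hgap.le, sqrt_sq (by positivity), rpow_neg hgap.le, ← sqrt_eq_rpow]
        field_simp

end IsBranchRoot

end Branch

section LebesgueIntegral

lemma setLIntegral_le_of_inter_support_subset {X : Type*} [MeasurableSpace X] {μ : Measure X}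
    {s t : Set X} (hs : MeasurableSet s) {f : X → ℝ≥0∞} (hst : s ∩ f.support ⊆ t) :
    ∫⁻ x in s, f x ∂μ ≤ ∫⁻ x in t, f x ∂μ := by
  rw [← support_indicator] at hst
  rw [← lintegral_indicator hs, ← setLIntegral_eq_of_support_subset hst]
  exact lintegral_mono (indicator_le_self s f)

lemma setLIntegral_image_four_mul_arctan {s : Set ℝ} (hs : MeasurableSet s) (g : ℝ → ℝ≥0∞) :
    ∫⁻ y in (fun t ↦ 4 * arctan t) '' s, g y =
      ∫⁻ t in s, ENNReal.ofReal (4 / (1 + t ^ 2)) * g (4 * arctan t) := by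
  have hderiv (t : ℝ) : HasDerivAt (fun t ↦ 4 * arctan t) (4 / (1 + t ^ 2)) t :=
    ((hasDerivAt_arctan t).const_mul 4).congr_deriv (by ring)
  have hinj : InjOn (fun t ↦ 4 * arctan t) s :=
    ((mul_right_injective₀ four_ne_zero).comp arctan_injective).injOn
  rw [lintegral_image_eq_lintegral_abs_deriv_mul hs (fun t _ ↦ (hderiv t).hasDerivWithinAt) hinj]
  refine lintegral_congr fun t ↦ ?_
  rw [abs_of_nonneg (by positivity)]

lemma lintegral_rpow_mul_one_sub_rpow {α β : ℝ} (hα : 0 < α) (hβ : 0 < β) :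
    ∫⁻ t in Ioo (0 : ℝ) 1, ENNReal.ofReal (t ^ (α - 1) * (1 - t) ^ (β - 1)) =
      ENNReal.ofReal (ProbabilityTheory.beta α β) := by
  have hbeta := ProbabilityTheory.beta_pos hα hβ
  have hpdf := ProbabilityTheory.lintegral_betaPDF_eq_one hα hβ
  simp only [ProbabilityTheory.lintegral_betaPDF, mul_assoc, one_div,
    ENNReal.ofReal_mul (inv_nonneg.mpr hbeta.le), ENNReal.ofReal_inv_of_pos hbeta] at hpdf
  rw [lintegral_const_mul' _ _ (by simpa using hbeta)] at hpdf
  rw [← inv_inv (ENNReal.ofReal (ProbabilityTheory.beta α β))]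
  exact ENNReal.eq_inv_of_mul_eq_one_left (mul_comm _ _ |>.trans hpdf)

lemma lintegral_rpow_mul_one_sub_div_rpow {a α β : ℝ} (ha : 0 < a) (hα : 0 < α) (hβ : 0 < β) :
    ∫⁻ t in Ioo (0 : ℝ) a, ENNReal.ofReal (t ^ (α - 1) * (1 - t / a) ^ (β - 1)) =
      ENNReal.ofReal (a ^ α * ProbabilityTheory.beta α β) := by
  have himage : (a * ·) '' Ioo (0 : ℝ) 1 = Ioo 0 a := by simp [image_mul_left_Ioo ha]
  rw [← himage, lintegral_image_eq_lintegral_abs_deriv_mul measurableSet_Ioo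
    (fun t _ ↦ ((hasDerivAt_id' t).const_mul a).hasDerivWithinAt)
    (mul_right_injective₀ ha.ne').injOn,
    ENNReal.ofReal_mul (by positivity), ← lintegral_rpow_mul_one_sub_rpow hα hβ,
    ← lintegral_const_mul' _ _ ENNReal.ofReal_ne_top]
  refine setLIntegral_congr_fun measurableSet_Ioo fun t ht ↦ ?_
  simp only [mul_one, abs_of_pos ha, mul_div_cancel_left₀ t ha.ne']
  rw [← ENNReal.ofReal_mul (by positivity), ← ENNReal.ofReal_mul (by positivity),
    mul_rpow ha.le ht.1.le, rpow_sub_one ha.ne']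
  field_simp

end LebesgueIntegral

section WeightedIntegral

variable {r s τ t x y : ℝ}

lemma K1_nonneg (x y : ℝ) : 0 ≤ K1 x y := by
  unfold K1; split_ifs <;> positivity

namespace IsBranchRoot

lemma K1_rpow_le (h : IsBranchRoot s τ) (hs : 0 < s) (ht : 0 < t) (htτ : t < τ) (hr : 0 ≤ r) :
    K1 (4 * arctan s) (4 * arctan t) ^ r ≤
      4 ^ r * (1 + s ^ 2) ^ r * (1 + t ^ 2) ^ r * (1 - t / τ) ^ (-(r / 2)) := by
  have hgap : 0 ≤ 1 - t / τ := sub_nonneg.mpr ((div_le_one h.pos).mpr htτ.le)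
  refine (rpow_le_rpow (K1_nonneg _ _) (h.K1_le hs ht htτ) hr).trans_eq ?_
  rw [mul_rpow (by positivity) (by positivity), mul_rpow (by positivity) (by positivity),
    mul_rpow (by positivity) (by positivity), ← rpow_mul hgap]
  ring_nf

lemma jacobian_mul_K1_rpow_mul_sin_rpow_le (h : IsBranchRoot s τ) (hs : 0 < s) (ht : 0 < t)
    (htτ : t < τ) (hr : 1 ≤ r) :
    4 / (1 + t ^ 2) * (K1 (4 * arctan s) (4 * arctan t) ^ r *
        sin (4 * arctan t / 2) ^ (-(1 / 2) : ℝ)) ≤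
      4 ^ (r + 1) * ((1 + s ^ 2) ^ r * (1 + τ ^ 2) ^ (r - 1 / 2)) *
        (t ^ (1 / 2 - 1 : ℝ) * (1 - t / τ) ^ (1 - r / 2 - 1)) := by
  have hgap : 0 ≤ 1 - t / τ := sub_nonneg.mpr ((div_le_one h.pos).mpr htτ.le)
  have hsin : sin (4 * arctan t / 2) ^ (-(1 / 2) : ℝ) ≤
      t ^ (-(1 / 2) : ℝ) * (1 + t ^ 2) ^ (1 / 2 : ℝ) := by
    rw [sin_half_four_mul_arctan, ← neg_neg (1 / 2 : ℝ), rpow_neg (by positivity : 0 ≤ 1 + t ^ 2),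
      neg_neg, ← div_eq_mul_inv, ← div_rpow (by positivity) (by positivity)]
    refine rpow_le_rpow_of_nonpos (by positivity) ?_ (by norm_num)
    gcongr
    linarith
  calc 4 / (1 + t ^ 2) * (K1 (4 * arctan s) (4 * arctan t) ^ r *
        sin (4 * arctan t / 2) ^ (-(1 / 2) : ℝ))
      ≤ 4 / (1 + t ^ 2) * ((4 ^ r * (1 + s ^ 2) ^ r * (1 + t ^ 2) ^ r * (1 - t / τ) ^ (-(r / 2))) *
          (t ^ (-(1 / 2) : ℝ) * (1 + t ^ 2) ^ (1 / 2 : ℝ))) := by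
        have hsin_nonneg : 0 ≤ sin (4 * arctan t / 2) := by
          rw [sin_half_four_mul_arctan]
          positivity
        gcongr
        exact h.K1_rpow_le hs ht htτ (by linarith)
    _ = 4 ^ (r + 1) * ((1 + s ^ 2) ^ r * (1 + t ^ 2) ^ (r - 1 / 2)) *
          (t ^ (1 / 2 - 1 : ℝ) * (1 - t / τ) ^ (1 - r / 2 - 1)) := by
        rw [rpow_add_one four_ne_zero, show r - 1 / 2 = r + 1 / 2 - 1 by ring,
          rpow_sub_one (by positivity), rpow_add (by positivity)]
        ring_nf
    _ ≤ _ := by gcongr; linarith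

lemma rpow_mul_rpow_mul_rpow_le (h : IsBranchRoot s τ) (hs : 0 < s) (hr : 1 ≤ r) :
    (1 + s ^ 2) ^ r * (1 + τ ^ 2) ^ (r - 1 / 2) * τ ^ (1 / 2 : ℝ) ≤
      ((1 + s ^ 2) / s) ^ (2 * r - 3 / 2) := by
  have hτ := h.pos
  have hroot : τ * (1 + s ^ 2) * (1 + τ ^ 2) ≤ 1 / s := by
    rw [le_div_iff₀ hs]
    have := h.four_mul_le_one hs
    have : 0 < s * τ * (1 + s ^ 2) * (1 + τ ^ 2) := by positivity
    linarith
  have hdomain : 1 + τ ^ 2 ≤ (1 + s ^ 2) / s * (1 / s) := by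
    rw [div_mul_div_comm, mul_one, le_div_iff₀ (by positivity)]
    nlinarith [h.mul_lt_one, mul_pos hs hτ]
  calc (1 + s ^ 2) ^ r * (1 + τ ^ 2) ^ (r - 1 / 2) * τ ^ (1 / 2 : ℝ)
      = (τ * (1 + s ^ 2) * (1 + τ ^ 2)) ^ (1 / 2 : ℝ) * (1 + s ^ 2) ^ (r - 1 / 2) *
          (1 + τ ^ 2) ^ (r - 1) := by
        rw [mul_rpow (by positivity) (by positivity), mul_rpow (by positivity) (by positivity),
          show r - 1 / 2 = 1 / 2 + (r - 1) by ring, rpow_add (by positivity : 0 < 1 + τ ^ 2),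
          show r = 1 / 2 + (1 / 2 + (r - 1)) by ring, rpow_add (by positivity : 0 < 1 + s ^ 2)]
        ring_nf
    _ ≤ (1 / s) ^ (1 / 2 : ℝ) * (1 + s ^ 2) ^ (r - 1 / 2) *
          ((1 + s ^ 2) / s * (1 / s)) ^ (r - 1) := by gcongr
    _ = ((1 + s ^ 2) * (1 / s)) ^ (r - 1 / 2) * ((1 + s ^ 2) / s) ^ (r - 1) := by
        rw [mul_rpow (by positivity) (by positivity), mul_rpow (by positivity) (by positivity),
          show r - 1 / 2 = 1 / 2 + (r - 1) by ring, rpow_add (by positivity : 0 < 1 / s)]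
        ring
    _ = ((1 + s ^ 2) / s) ^ (2 * r - 3 / 2) := by
        rw [mul_one_div, ← rpow_add (by positivity)]
        ring_nf

lemma lintegral_image_K1_rpow_le (h : IsBranchRoot s τ) (hs : 0 < s) (hr₁ : 1 ≤ r) (hr₂ : r < 2) :
    ∫⁻ y in (fun t ↦ 4 * arctan t) '' Ioo 0 τ,
        ENNReal.ofReal (K1 (4 * arctan s) y ^ r * sin (y / 2) ^ (-(1 / 2) : ℝ)) ≤
      ENNReal.ofReal (4 ^ (r + 1) * ProbabilityTheory.beta (1 / 2) (1 - r / 2) *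
        (2 / sin (4 * arctan s / 2)) ^ (2 * r - 3 / 2)) := by
  have hbeta : 0 < ProbabilityTheory.beta (1 / 2) (1 - r / 2) :=
    ProbabilityTheory.beta_pos (by norm_num) (by linarith)
  let c := 4 ^ (r + 1) * ((1 + s ^ 2) ^ r * (1 + τ ^ 2) ^ (r - 1 / 2))
  calc ∫⁻ y in (fun t ↦ 4 * arctan t) '' Ioo 0 τ,
        ENNReal.ofReal (K1 (4 * arctan s) y ^ r * sin (y / 2) ^ (-(1 / 2) : ℝ))
      = ∫⁻ t in Ioo 0 τ, ENNReal.ofReal (4 / (1 + t ^ 2) * (K1 (4 * arctan s) (4 * arctan t) ^ r *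
          sin (4 * arctan t / 2) ^ (-(1 / 2) : ℝ))) := by
        rw [setLIntegral_image_four_mul_arctan measurableSet_Ioo]
        refine lintegral_congr fun t ↦ (ENNReal.ofReal_mul (by positivity)).symm
    _ ≤ ∫⁻ t in Ioo 0 τ, ENNReal.ofReal c *
          ENNReal.ofReal (t ^ (1 / 2 - 1 : ℝ) * (1 - t / τ) ^ (1 - r / 2 - 1)) := by
        refine setLIntegral_mono' measurableSet_Ioo fun t ht ↦ ?_
        rw [← ENNReal.ofReal_mul (by positivity)]
        exact ENNReal.ofReal_le_ofReal (h.jacobian_mul_K1_rpow_mul_sin_rpow_le hs ht.1 ht.2 hr₁)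
    _ = ENNReal.ofReal (c * (τ ^ (1 / 2 : ℝ) * ProbabilityTheory.beta (1 / 2) (1 - r / 2))) := by
        rw [lintegral_const_mul' _ _ ENNReal.ofReal_ne_top, lintegral_rpow_mul_one_sub_div_rpow
          h.pos (by norm_num) (by linarith), ← ENNReal.ofReal_mul (by positivity)]
    _ ≤ _ := by
        have hsin : 2 / sin (4 * arctan s / 2) = (1 + s ^ 2) / s := by
          rw [sin_half_four_mul_arctan]; field_simp
        rw [hsin]
        refine ENNReal.ofReal_le_ofReal (le_of_eq_of_le (by ring : _ = 4 ^ (r + 1) *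
          ProbabilityTheory.beta (1 / 2) (1 - r / 2) * ((1 + s ^ 2) ^ r *
            (1 + τ ^ 2) ^ (r - 1 / 2) * τ ^ (1 / 2 : ℝ))) ?_)
        gcongr
        exact h.rpow_mul_rpow_mul_rpow_le hs hr₁

end IsBranchRoot

end WeightedIntegral

section Reflection

variable {x y : ℝ}

lemma Fm_comm (x y : ℝ) : Fm x y = Fm y x := by unfold Fm; ring

lemma K1_comm (x y : ℝ) : K1 x y = K1 y x := by simp only [K1, Fm_comm x y]

lemma Fm_two_pi_sub (x y : ℝ) : Fm (2 * π - x) (2 * π - y) = Fm x y := by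
  simp only [Fm, sub_div, mul_div_cancel_left₀ π two_ne_zero, cos_pi_sub, sin_pi_sub]
  ring

lemma K1_two_pi_sub (x y : ℝ) : K1 (2 * π - x) (2 * π - y) = K1 x y := by
  simp only [K1, Fm_two_pi_sub]

lemma measurable_K1 : Measurable fun z : ℝ × ℝ ↦ K1 z.1 z.2 := by
  have hFm : Measurable fun z : ℝ × ℝ ↦ Fm z.1 z.2 := by unfold Fm; fun_prop
  exact .ite (measurableSet_lt measurable_const hFm) (by fun_prop) measurable_const

lemma two_pi_sub_mem_Ioo (hx : x ∈ Ioo 0 (2 * π)) : 2 * π - x ∈ Ioo 0 (2 * π) :=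
  ⟨sub_pos.mpr hx.2, sub_lt_self _ hx.1⟩

lemma sin_half_pos (hx : x ∈ Ioo 0 (2 * π)) : 0 < sin (x / 2) :=
  sin_pos_of_pos_of_lt_pi (half_pos hx.1) (by linarith [hx.2])

lemma sin_half_two_pi_sub (x : ℝ) : sin ((2 * π - x) / 2) = sin (x / 2) := by
  rw [sub_div, mul_div_cancel_left₀ π two_ne_zero, sin_pi_sub]

/-- The section at `x` of the half of the region `0 < Fm x y` in `(0, 2π)²` on which
`cos (x / 2) + cos (y / 2)` is positive; the other half is its image under
`(x, y) ↦ (2 * π - x, 2 * π - y)`. -/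
def positiveBranch (x : ℝ) : Set ℝ :=
  {y ∈ Ioo 0 (2 * π) | 0 < Fm x y ∧ 0 < cos (x / 2) + cos (y / 2)}

lemma mem_positiveBranch_or_two_pi_sub_mem (hx : x ∈ Ioo 0 (2 * π)) (hy : y ∈ Ioo 0 (2 * π))
    (hF : 0 < Fm x y) : y ∈ positiveBranch x ∨ 2 * π - y ∈ positiveBranch (2 * π - x) := by
  rcases lt_trichotomy (cos (x / 2) + cos (y / 2)) 0 with hneg | hzero | hpos
  · refine .inr ⟨two_pi_sub_mem_Ioo hy, (Fm_two_pi_sub x y).symm ▸ hF, ?_⟩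
    simp only [sub_div, mul_div_cancel_left₀ π two_ne_zero, cos_pi_sub]
    linarith
  · have := mul_pos (sin_half_pos hx) (sin_half_pos hy)
    rw [Fm, hzero] at hF
    linarith
  · exact .inl ⟨hy, hF, hpos⟩

lemma IsBranchRoot.positiveBranch_subset {s τ : ℝ} (h : IsBranchRoot s τ) (hs : 0 < s) :
    positiveBranch (4 * arctan s) ⊆ (fun t ↦ 4 * arctan t) '' Ioo 0 τ := by
  rintro y ⟨hy, hF, hcos⟩
  rw [← four_mul_arctan_tan_div_four hy] at hF hcos
  have ht := tan_div_four_pos hy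
  rw [Fm_four_mul_arctan_pos_iff] at hF
  rw [cos_half_add_cos_half_four_mul_arctan, div_pos_iff_of_pos_right (by positivity),
    mul_pos_iff_of_pos_left two_pos, sub_pos, sq_lt_one_iff₀ (by positivity)] at hcos
  exact ⟨tan (y / 4), ⟨ht, h.lt_of_branchPoly_pos hs.le hcos.le hF⟩,
    four_mul_arctan_tan_div_four hy⟩

end Reflection

section SchurBound

variable {x r : ℝ}

lemma lintegral_positiveBranch_K1_rpow_le (hx : x ∈ Ioo 0 (2 * π)) (hr₁ : 1 ≤ r) (hr₂ : r < 2) :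
    ∫⁻ y in positiveBranch x, ENNReal.ofReal (K1 x y ^ r * sin (y / 2) ^ (-(1 / 2) : ℝ)) ≤
      ENNReal.ofReal (4 ^ (r + 1) * ProbabilityTheory.beta (1 / 2) (1 - r / 2) *
        (2 / sin (x / 2)) ^ (2 * r - 3 / 2)) := by
  have hs := tan_div_four_pos hx
  obtain ⟨τ, h⟩ := exists_isBranchRoot hs
  rw [← four_mul_arctan_tan_div_four hx]
  exact (lintegral_mono_set (h.positiveBranch_subset hs)).trans
    (h.lintegral_image_K1_rpow_le hs hr₁ hr₂)

lemma lintegral_K1_rpow_le (hx : x ∈ Ioo 0 (2 * π)) (hr₁ : 1 ≤ r) (hr₂ : r < 2) :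
    ∫⁻ y in Ioo 0 (2 * π), ENNReal.ofReal (K1 x y ^ r * sin (y / 2) ^ (-(1 / 2) : ℝ)) ≤
      2 * ENNReal.ofReal (4 ^ (r + 1) * ProbabilityTheory.beta (1 / 2) (1 - r / 2) *
        (2 / sin (x / 2)) ^ (2 * r - 3 / 2)) := by
  let g := fun x y ↦ ENNReal.ofReal (K1 x y ^ r * sin (y / 2) ^ (-(1 / 2) : ℝ))
  have hsupport : Ioo 0 (2 * π) ∩ (g x).support ⊆
      positiveBranch x ∪ (2 * π - ·) ⁻¹' positiveBranch (2 * π - x) := by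
    rintro y ⟨hy, hgy⟩
    refine mem_positiveBranch_or_two_pi_sub_mem hx hy (by_contra fun hF ↦ hgy ?_)
    simp [g, K1, hF, zero_rpow (by linarith : r ≠ 0)]
  have hreflect : ∫⁻ y in (2 * π - ·) ⁻¹' positiveBranch (2 * π - x), g x y =
      ∫⁻ y in positiveBranch (2 * π - x), g (2 * π - x) y := by
    rw [← (volume.measurePreserving_sub_left (2 * π)).setLIntegral_comp_preimage_emb
      (measurableEmbedding_subLeft (2 * π)) (g (2 * π - x))]
    simp only [g, K1_two_pi_sub, sin_half_two_pi_sub]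
  have hleft := lintegral_positiveBranch_K1_rpow_le hx hr₁ hr₂
  have hright := lintegral_positiveBranch_K1_rpow_le (two_pi_sub_mem_Ioo hx) hr₁ hr₂
  rw [sin_half_two_pi_sub] at hright
  calc ∫⁻ y in Ioo 0 (2 * π), g x y
      ≤ ∫⁻ y in positiveBranch x ∪ (2 * π - ·) ⁻¹' positiveBranch (2 * π - x), g x y :=
        setLIntegral_le_of_inter_support_subset measurableSet_Ioo hsupport
    _ ≤ (∫⁻ y in positiveBranch x, g x y) +
          ∫⁻ y in (2 * π - ·) ⁻¹' positiveBranch (2 * π - x), g x y := lintegral_union_le _ _ _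
    _ ≤ _ := by
        rw [hreflect, two_mul (ENNReal.ofReal _)]
        exact add_le_add hleft hright

lemma muI_eq_restrict_Ioo : muI = volume.restrict (Ioo 0 (2 * π)) :=
  restrict_Ioo_eq_restrict_Ico.symm

instance isFiniteMeasure_muI : IsFiniteMeasure muI := by
  unfold muI II
  infer_instance

lemma ae_muI_mem_Ioo : ∀ᵐ x ∂muI, x ∈ Ioo 0 (2 * π) := by
  rw [muI_eq_restrict_Ioo]
  exact ae_restrict_mem measurableSet_Ioo

/-- The kernel `K1 ^ r` damped at the endpoints, where the mass `∫ y, K1 x y ^ r` may blow up. The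
exponent `2 * r - 2` turns the bound `sin (x / 2) ^ (3 / 2 - 2 * r)` for the weighted integral of
`K1 ^ r` into the weight `sin (x / 2) ^ (-1 / 2)` itself. -/
def dampedKernel (r : ℝ) (z : ℝ × ℝ) : ℝ :=
  sin (z.1 / 2) ^ (2 * r - 2) * K1 z.1 z.2 ^ r * sin (z.2 / 2) ^ (2 * r - 2)

lemma dampedKernel_comm (r x y : ℝ) : dampedKernel r (x, y) = dampedKernel r (y, x) := by
  simp only [dampedKernel, K1_comm x y]
  ring

lemma measurable_dampedKernel (r : ℝ) : Measurable (dampedKernel r) := by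
  have hsin : Measurable fun x : ℝ ↦ sin (x / 2) ^ (2 * r - 2) := by fun_prop
  exact ((hsin.comp measurable_fst).mul (measurable_K1.pow_const r)).mul (hsin.comp measurable_snd)

lemma exists_lintegral_dampedKernel_le (hr₁ : 1 ≤ r) (hr₂ : r < 2) :
    ∃ N : ℝ≥0, ∀ x ∈ Ioo 0 (2 * π), ∫⁻ y, ENNReal.ofReal (dampedKernel r (x, y)) *
        ENNReal.ofReal (sin (y / 2) ^ (-(1 / 2) : ℝ)) ∂muI ≤
      N * ENNReal.ofReal (sin (x / 2) ^ (-(1 / 2) : ℝ)) := by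
  let c := 4 ^ (r + 1) * ProbabilityTheory.beta (1 / 2) (1 - r / 2)
  have hc : 0 < c := mul_pos (by positivity)
    (ProbabilityTheory.beta_pos (by norm_num) (by linarith))
  refine ⟨(2 * (c * 2 ^ (2 * r - 3 / 2))).toNNReal, fun x hx ↦ ?_⟩
  have hsx := sin_half_pos hx
  calc ∫⁻ y, ENNReal.ofReal (dampedKernel r (x, y)) *
        ENNReal.ofReal (sin (y / 2) ^ (-(1 / 2) : ℝ)) ∂muI
      ≤ ∫⁻ y in Ioo 0 (2 * π), ENNReal.ofReal (sin (x / 2) ^ (2 * r - 2)) *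
          ENNReal.ofReal (K1 x y ^ r * sin (y / 2) ^ (-(1 / 2) : ℝ)) := by
        rw [muI_eq_restrict_Ioo]
        refine setLIntegral_mono' measurableSet_Ioo fun y hy ↦ ?_
        have hsy := sin_half_pos hy
        have hK1 := K1_nonneg x y
        have hdamped : dampedKernel r (x, y) ≤ sin (x / 2) ^ (2 * r - 2) * K1 x y ^ r :=
          mul_le_of_le_one_right (by positivity)
            (rpow_le_one hsy.le (sin_le_one _) (by linarith))
        rw [← ENNReal.ofReal_mul' (by positivity), ← ENNReal.ofReal_mul (by positivity),
          ← mul_assoc]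
        gcongr
    _ ≤ ENNReal.ofReal (sin (x / 2) ^ (2 * r - 2)) *
          (2 * ENNReal.ofReal (c * (2 / sin (x / 2)) ^ (2 * r - 3 / 2))) := by
        rw [lintegral_const_mul' _ _ ENNReal.ofReal_ne_top]
        gcongr
        exact lintegral_K1_rpow_le hx hr₁ hr₂
    _ = _ := by
        have hpow : sin (x / 2) ^ (2 * r - 2) * (c * (2 / sin (x / 2)) ^ (2 * r - 3 / 2)) =
            c * 2 ^ (2 * r - 3 / 2) * sin (x / 2) ^ (-(1 / 2) : ℝ) := by
          rw [div_rpow two_pos.le hsx.le, show 2 * r - 2 = 2 * r - 3 / 2 + -(1 / 2) by ring,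
            rpow_add hsx]
          field_simp
        rw [mul_left_comm, ← ENNReal.ofReal_mul (by positivity), hpow, ← ENNReal.ofReal_ofNat 2,
          ← ENNReal.ofReal_mul two_pos.le, ← mul_assoc 2, ENNReal.ofReal_mul (by positivity)]
        rfl

theorem exists_isL2BoundedKernel_dampedKernel (hr₁ : 1 ≤ r) (hr₂ : r < 2) :
    ∃ M, IsL2BoundedKernel muI muI (fun z ↦ ENNReal.ofReal (dampedKernel r z)) M := by
  obtain ⟨N, hN⟩ := exists_lintegral_dampedKernel_le hr₁ hr₂
  let w := fun x : ℝ ↦ ENNReal.ofReal (sin (x / 2) ^ (-(1 / 2) : ℝ))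
  have hw : Measurable w := by fun_prop
  have hw0 : ∀ᵐ x ∂muI, w x ≠ 0 ∧ w x ≠ ∞ := by
    filter_upwards [ae_muI_mem_Ioo] with x hx
    have := rpow_pos_of_pos (sin_half_pos hx) (-(1 / 2))
    exact ⟨(ENNReal.ofReal_pos.mpr this).ne', ENNReal.ofReal_ne_top⟩
  have hrow := ae_muI_mem_Ioo.mono hN
  have hcolumn : ∀ᵐ y ∂muI, ∫⁻ x, ENNReal.ofReal (dampedKernel r (x, y)) * w x ∂muI ≤ N * w y := by
    filter_upwards [hrow] with y hy
    simpa only [dampedKernel_comm r _ y] using hy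
  exact ⟨_, isL2BoundedKernel_of_schur (measurable_dampedKernel r).ennreal_ofReal hw hw hw0
    hrow hcolumn⟩

end SchurBound

section SandwichKernel

variable {ψ : ℝ → ℂ} {C p r x : ℝ}

/-- The kernel `K(x, y) = ψ(x)* K₁(x, y) ψ(y)`. -/
def sandwichKernel (ψ : ℝ → ℂ) (z : ℝ × ℝ) : ℂ := conj (ψ z.1) * (K1 z.1 z.2 : ℝ) * ψ z.2

lemma measurable_sandwichKernel (hψ : Measurable ψ) : Measurable (sandwichKernel ψ) := by
  have := measurable_K1
  unfold sandwichKernel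
  fun_prop

lemma conj_sandwichKernel_swap (ψ : ℝ → ℂ) (z : ℝ × ℝ) :
    conj (sandwichKernel ψ z.swap) = sandwichKernel ψ z := by
  simp only [sandwichKernel, Prod.fst_swap, Prod.snd_swap, map_mul, Complex.conj_conj,
    Complex.conj_ofReal, K1_comm z.2 z.1]
  ring

lemma norm_rpow_le_of_norm_le (hC : 0 ≤ C) (hp : 0 ≤ p) (hr : 1 ≤ r) (hrp : 2 * r - 2 ≤ p)
    (hx : x ∈ Ioo 0 (2 * π)) (hbound : ‖ψ x‖ ≤ C * sin (x / 2) ^ p) :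
    ‖ψ x‖ ^ r ≤ C ^ r * sin (x / 2) ^ (2 * r - 2) := by
  have hs := sin_half_pos hx
  calc ‖ψ x‖ ^ r ≤ (C * sin (x / 2) ^ p) ^ r := by gcongr
    _ = C ^ r * sin (x / 2) ^ (p * r) := by rw [mul_rpow hC (by positivity), rpow_mul hs.le]
    _ ≤ C ^ r * sin (x / 2) ^ (2 * r - 2) := by
        have hexponent : 2 * r - 2 ≤ p * r := hrp.trans (le_mul_of_one_le_right hp hr)
        exact mul_le_mul_of_nonneg_left
          (rpow_le_rpow_of_exponent_ge hs (sin_le_one _) hexponent) (by positivity)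

lemma exists_isL2BoundedKernel_enorm_sandwichKernel_rpow (hC : 0 ≤ C) (hp : 0 ≤ p) (hr₁ : 1 ≤ r)
    (hr₂ : r < 2) (hrp : 2 * r - 2 ≤ p) (hbound : ∀ x ∈ II, ‖ψ x‖ ≤ C * sin (x / 2) ^ p) :
    ∃ M, IsL2BoundedKernel muI muI (fun z ↦ ‖sandwichKernel ψ z‖ₑ ^ r) M := by
  obtain ⟨M, hM⟩ := exists_isL2BoundedKernel_dampedKernel hr₁ hr₂
  refine ⟨_, (hM.const_mul (C ^ r * C ^ r).toNNReal).mono ?_⟩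
  filter_upwards [Measure.quasiMeasurePreserving_fst.ae ae_muI_mem_Ioo,
    Measure.quasiMeasurePreserving_snd.ae ae_muI_mem_Ioo] with z hx hy
  have hψx := norm_rpow_le_of_norm_le hC hp hr₁ hrp hx (hbound _ (Ioo_subset_Ico_self hx))
  have hψy := norm_rpow_le_of_norm_le hC hp hr₁ hrp hy (hbound _ (Ioo_subset_Ico_self hy))
  have hsx := sin_half_pos hx
  have hK1 := K1_nonneg z.1 z.2
  have hnorm : ‖sandwichKernel ψ z‖ ^ r ≤ C ^ r * C ^ r * dampedKernel r z := calc
    ‖sandwichKernel ψ z‖ ^ r = ‖ψ z.1‖ ^ r * K1 z.1 z.2 ^ r * ‖ψ z.2‖ ^ r := by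
        rw [sandwichKernel, norm_mul, norm_mul, RCLike.norm_conj, Complex.norm_of_nonneg hK1,
          mul_rpow (by positivity) (by positivity), mul_rpow (by positivity) hK1]
    _ ≤ (C ^ r * sin (z.1 / 2) ^ (2 * r - 2)) * K1 z.1 z.2 ^ r *
          (C ^ r * sin (z.2 / 2) ^ (2 * r - 2)) := by gcongr
    _ = C ^ r * C ^ r * dampedKernel r z := by rw [dampedKernel]; ring
  rw [← ofReal_norm, ENNReal.ofReal_rpow_of_nonneg (norm_nonneg _) (by linarith)]
  exact (ENNReal.ofReal_le_ofReal hnorm).trans_eq (ENNReal.ofReal_mul (by positivity))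

end SandwichKernel

/-- **Proposition 4.4.**  If `ψ` is measurable with `|ψ(x)| ≤ C sin(x/2)^p` on `I` for some
`C, p > 0`, then the kernel `K(x,y) = ψ(x)* K₁(x,y) ψ(y)` defines a compact self-adjoint
integral operator on `L²(I)`. -/
theorem K1_kernel_compact
    (ψ : ℝ → ℂ) (hmeas : Measurable ψ) (C p : ℝ) (hC : 0 < C) (hp : 0 < p)
    (hbound : ∀ x ∈ II, ‖ψ x‖ ≤ C * Real.sin (x / 2) ^ p) :
    ∃ T : Lp ℂ 2 muI →L[ℂ] Lp ℂ 2 muI,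
      IsCompactOperator T ∧ IsSelfAdjoint T ∧
      ∀ f : Lp ℂ 2 muI,
        (T f : ℝ → ℂ) =ᵐ[muI]
          fun x => ∫ y in II, (starRingEnd ℂ) (ψ x) * (K1 x y : ℝ) * ψ y * f y := by
  obtain ⟨r, hr₁, hr₂, hrp⟩ : ∃ r : ℝ, 1 < r ∧ r < 2 ∧ 2 * r - 2 ≤ p := by
    obtain ⟨ε, hε, hεp⟩ := exists_between (lt_min hp two_pos)
    exact ⟨1 + ε / 2, by linarith, by linarith [hεp.trans_le (min_le_right p 2)],
      by linarith [hεp.trans_le (min_le_left p 2)]⟩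
  have hk := measurable_sandwichKernel hmeas
  obtain ⟨M, hM⟩ :=
    exists_isL2BoundedKernel_enorm_sandwichKernel_rpow hC.le hp.le hr₁.le hr₂ hrp hbound
  obtain ⟨M', hM'⟩ := hM.exists_of_rpow hk hr₁.le
  obtain ⟨T, hT⟩ := hM'.exists_hasIntegralKernel hk
  exact ⟨T, hT.isCompactOperator_of_rpow hk hr₁ hM,
    hT.isSelfAdjoint hk hM' (conj_sandwichKernel_swap ψ), fun f ↦ (hT f).mono fun _ h ↦ h.2⟩
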